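/- arXiv:2009.08447 — 2 statements merged into one kernel-verified Lean document; each statement's English description precedes it below -/
import Mathlib

section
/- Let A ∈ ℝ^{m×n} have every row nonzero, let y₀ ∈ Δᵐ have strictly positive entries, let y ∈ Δᵐ, and define p_{ij} = ((y_i + 2·(y₀)_i)/3) · A_{ij}² / ‖A_{i:}‖₂². Then for every w ∈ Δⁿ: Σ_{(i,j) : A_{ij} ≠ 0} w_j · A_{ij}² · ( y_i − (y₀)_i )² / p_{ij} ≤ 2 · ( max_{i∈[m]} ‖A_{i:}‖₂² ) · Σ_{i=1}^m y_i log( y_i / (y₀)_i ), with the convention 0·log 0 = 0. -/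
/-!
Dividing `A_{ij}² (yᵢ - (y₀)ᵢ)²` by `p_{ij}` leaves `‖A_{i:}‖₂²` times the ratio
`(yᵢ - (y₀)ᵢ)² / ((yᵢ + 2(y₀)ᵢ)/3)`, which no longer depends on `j`, so `w` enters only through its
total mass. With `x = yᵢ/(y₀)ᵢ`, this ratio is bounded by twice the `i`-th summand of the entropy
divergence through the inequality `3(x - 1)² ≤ 2(x + 2)(x log x + 1 - x)` behind Pinsker's
inequality. The difference of the two sides is convex on `[0, ∞)`, because its second derivative is
`4(log x - (1 - 1/x)) ≥ 0`, and it vanishes together with its derivative at `x = 1`.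
-/

open InformationTheory Set
open scoped Topology

section KLFun

variable {a b x : ℝ}

/-- The difference of the two sides of the inequality `3(x - 1)² ≤ 2(x + 2)(x log x + 1 - x)`, from
which Pinsker's inequality is usually derived. -/
noncomputable def pinskerGap (x : ℝ) : ℝ :=
  2 * (x + 2) * klFun x - 3 * (x - 1) ^ 2

lemma hasDerivAt_pinskerGap (hx : x ≠ 0) :
    HasDerivAt pinskerGap (2 * klFun x + 2 * (x + 2) * Real.log x - 6 * (x - 1)) x := by
  have hlin : HasDerivAt (fun t : ℝ ↦ 2 * (t + 2)) 2 x := by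
    simpa using ((hasDerivAt_id x).add_const 2).const_mul 2
  have hsq : HasDerivAt (fun t : ℝ ↦ 3 * (t - 1) ^ 2) (6 * (x - 1)) x := by
    convert! (((hasDerivAt_id x).sub_const 1).pow 2).const_mul 3 using 1
    simp only [id_eq]
    ring
  exact (hlin.mul (hasDerivAt_klFun hx)).sub hsq

lemma hasDerivAt_deriv_pinskerGap (hx : x ≠ 0) :
    HasDerivAt (deriv pinskerGap) (4 * (Real.log x - (1 - x⁻¹))) x := by
  have hderiv : deriv pinskerGap =ᶠ[𝓝 x]
      fun t ↦ 2 * klFun t + 2 * (t + 2) * Real.log t - 6 * (t - 1) :=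
    (eventually_ne_nhds hx).mono fun t ht ↦ (hasDerivAt_pinskerGap ht).deriv
  have hlin : HasDerivAt (fun t : ℝ ↦ 2 * (t + 2)) 2 x := by
    simpa using ((hasDerivAt_id x).add_const 2).const_mul 2
  have hsub : HasDerivAt (fun t : ℝ ↦ 6 * (t - 1)) 6 x := by
    simpa using ((hasDerivAt_id x).sub_const 1).const_mul 6
  have hsecond := (((hasDerivAt_klFun hx).const_mul 2).add
    (hlin.mul (Real.hasDerivAt_log hx))).sub hsub
  refine (hsecond.congr_of_eventuallyEq hderiv).congr_deriv ?_
  field_simp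
  ring

lemma convexOn_pinskerGap : ConvexOn ℝ (Ici 0) pinskerGap := by
  have hcont : Continuous pinskerGap := by
    unfold pinskerGap
    fun_prop
  refine convexOn_of_hasDerivWithinAt2_nonneg (convex_Ici 0) hcont.continuousOn
    (f' := deriv pinskerGap) (f'' := fun t ↦ 4 * (Real.log t - (1 - t⁻¹))) ?_ ?_ ?_ <;>
    rw [interior_Ici] <;> intro t (ht : 0 < t)
  · exact (hasDerivAt_pinskerGap ht.ne').differentiableAt.hasDerivAt.hasDerivWithinAt
  · exact (hasDerivAt_deriv_pinskerGap ht.ne').hasDerivWithinAt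
  · linarith [Real.one_sub_inv_le_log_of_pos ht]

lemma isMinOn_pinskerGap : IsMinOn pinskerGap (Ici 0) 1 := by
  refine convexOn_pinskerGap.isMinOn_of_rightDeriv_eq_zero (by simp) ?_
  rw [(hasDerivAt_pinskerGap one_ne_zero).hasDerivWithinAt.derivWithin (uniqueDiffWithinAt_Ioi 1)]
  simp [klFun_one]

lemma three_mul_sub_one_sq_le_mul_klFun (hx : 0 ≤ x) :
    3 * (x - 1) ^ 2 ≤ 2 * (x + 2) * klFun x := by
  simpa [pinskerGap, klFun_one] using isMinOn_pinskerGap hx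

lemma sub_sq_div_le_two_mul_mul_klFun_div (ha : 0 ≤ a) (hb : 0 < b) :
    (a - b) ^ 2 / ((a + 2 * b) / 3) ≤ 2 * (b * klFun (a / b)) := by
  rw [div_le_iff₀ (by positivity)]
  calc (a - b) ^ 2 = b ^ 2 / 3 * (3 * (a / b - 1) ^ 2) := by field_simp
    _ ≤ b ^ 2 / 3 * (2 * (a / b + 2) * klFun (a / b)) :=
      mul_le_mul_of_nonneg_left (three_mul_sub_one_sq_le_mul_klFun (by positivity)) (by positivity)
    _ = 2 * (b * klFun (a / b)) * ((a + 2 * b) / 3) := by field_simp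

end KLFun

section Estimator

variable {ι κ : Type*}

/-- The Bregman divergence `V_{y₀}(y) = ∑ᵢ (yᵢ log (yᵢ/(y₀)ᵢ) + (y₀)ᵢ - yᵢ)` of the negative
entropy, for vectors of arbitrary total mass. Each summand is written as `(y₀)ᵢ klFun (yᵢ/(y₀)ᵢ)`,
which agrees with this formula when `(y₀)ᵢ ≠ 0`. -/
noncomputable def entropyDivergence [Fintype ι] (y₀ y : ι → ℝ) : ℝ :=
  ∑ i, y₀ i * klFun (y i / y₀ i)

lemma entropyDivergence_eq_sum_mul_log [Fintype ι] {y₀ y : ι → ℝ}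
    (hy₀ : ∀ i, y₀ i ≠ 0) (hsum : ∑ i, y i = ∑ i, y₀ i) :
    entropyDivergence y₀ y = ∑ i, y i * Real.log (y i / y₀ i) := by
  have hterm (i : ι) :
      y₀ i * klFun (y i / y₀ i) = y i * Real.log (y i / y₀ i) + y₀ i - y i := by
    have := hy₀ i
    rw [klFun_apply]
    field_simp
  simp only [entropyDivergence, hterm, Finset.sum_sub_distrib, Finset.sum_add_distrib, hsum,
    add_sub_cancel_right]

variable [Fintype κ]

/-- The "sampling from the sum" weights `p_{ij} = ((yᵢ + 2(y₀)ᵢ)/3) · A_{ij}²/‖A_{i:}‖₂²`, from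
which the variance-reduced estimator draws its coordinates. They sum to one when `y₀` and `y` are
probability vectors and no row of `A` vanishes. -/
noncomputable def sumSampling (A : Matrix ι κ ℝ) (y₀ y : ι → ℝ) (i : ι) (j : κ) : ℝ :=
  (y i + 2 * y₀ i) / 3 * (A i j ^ 2 / ∑ l, A i l ^ 2)

lemma mul_sq_mul_sq_div_sumSampling {A : Matrix ι κ ℝ} {i : ι} {j : κ} (hA : A i j ≠ 0)
    (y₀ y : ι → ℝ) (c : ℝ) :
    c * A i j ^ 2 * (y i - y₀ i) ^ 2 / sumSampling A y₀ y i j =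
      c * ((∑ l, A i l ^ 2) * ((y i - y₀ i) ^ 2 / ((y i + 2 * y₀ i) / 3))) := by
  rw [sumSampling]
  field_simp

lemma ite_mul_sq_div_sumSampling_le (A : Matrix ι κ ℝ) {y₀ y : ι → ℝ} {i : ι}
    (hy₀ : 0 < y₀ i) (hy : 0 ≤ y i) (j : κ) {c : ℝ} (hc : 0 ≤ c) :
    (if A i j ≠ 0 then c * A i j ^ 2 * (y i - y₀ i) ^ 2 / sumSampling A y₀ y i j else 0) ≤
      c * ((∑ l, A i l ^ 2) * (2 * (y₀ i * klFun (y i / y₀ i)))) := by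
  split_ifs with hA
  · rw [mul_sq_mul_sq_div_sumSampling hA]
    gcongr
    exact sub_sq_div_le_two_mul_mul_klFun_div hy hy₀
  · have := klFun_nonneg (div_nonneg hy hy₀.le)
    positivity

theorem l1l1_vr_estimator_local_moment_general [Fintype ι] (A : Matrix ι κ ℝ) {y₀ y : ι → ℝ}
    (hy₀ : ∀ i, 0 < y₀ i) (hy : ∀ i, 0 ≤ y i) {w : κ → ℝ} (hw : ∀ j, 0 ≤ w j)
    {L : ℝ} (hL : ∀ i, ∑ l, A i l ^ 2 ≤ L) :
    (∑ i, ∑ j, if A i j ≠ 0 then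
        w j * A i j ^ 2 * (y i - y₀ i) ^ 2 / sumSampling A y₀ y i j else 0)
      ≤ 2 * L * (∑ j, w j) * entropyDivergence y₀ y := by
  have hterm (i : ι) (j : κ) := ite_mul_sq_div_sumSampling_le A (hy₀ i) (hy i) j (hw j)
  have hdiv (i : ι) : 0 ≤ y₀ i * klFun (y i / y₀ i) :=
    mul_nonneg (hy₀ i).le (klFun_nonneg (div_nonneg (hy i) (hy₀ i).le))
  calc _ ≤ ∑ i, ∑ j, w j * ((∑ l, A i l ^ 2) * (2 * (y₀ i * klFun (y i / y₀ i)))) := by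
        gcongr with i _ j _
        exact hterm i j
    _ ≤ ∑ i, ∑ j, w j * (L * (2 * (y₀ i * klFun (y i / y₀ i)))) := by
        gcongr with i _ j _
        exacts [hw j, mul_nonneg zero_le_two (hdiv i), hL i]
    _ = 2 * L * (∑ j, w j) * entropyDivergence y₀ y := by
        simp only [← Finset.sum_mul, ← Finset.mul_sum, entropyDivergence]
        ring

end Estimator

/-- Local-norm second moment bound for the variance-reduced ℓ₁-ℓ₁
coordinate gradient estimator with the "sampling from the sum" distribution
`p_{ij} = ((yᵢ + 2(y₀)ᵢ)/3)·A_{ij}²/‖A_{i:}‖₂²`: for every `w ∈ Δⁿ`,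
`∑_{A_{ij}≠0} wⱼ A_{ij}² (yᵢ − (y₀)ᵢ)² / p_{ij} ≤ 2 (maxᵢ ‖A_{i:}‖₂²) · KL(y ∥ y₀)`. -/
theorem l1l1_vr_estimator_local_moment
    (m n : ℕ) (hm : 0 < m)
    (A : Matrix (Fin m) (Fin n) ℝ) (hrow : ∀ i, A i ≠ 0)
    (y₀ : Fin m → ℝ) (hy₀ : y₀ ∈ stdSimplex ℝ (Fin m)) (hy₀pos : ∀ i, 0 < y₀ i)
    (y : Fin m → ℝ) (hy : y ∈ stdSimplex ℝ (Fin m))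
    (p : Fin m → Fin n → ℝ)
    (hp : ∀ i j, p i j = (y i + 2 * y₀ i) / 3 * ((A i j) ^ 2 / ∑ l, (A i l) ^ 2)) :
    ∀ w ∈ stdSimplex ℝ (Fin n),
      (∑ i, ∑ j, if A i j ≠ 0 then w j * (A i j) ^ 2 * (y i - y₀ i) ^ 2 / p i j else 0)
        ≤ 2 * Finset.univ.sup' ⟨⟨0, hm⟩, Finset.mem_univ _⟩ (fun i => ∑ l, (A i l) ^ 2)
            * ∑ i, y i * Real.log (y i / y₀ i) := by
  obtain rfl : p = sumSampling A y₀ y := by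
    ext i j
    exact hp i j
  intro w hw
  have hmax (i : Fin m) := Finset.le_sup' (fun i ↦ ∑ l, A i l ^ 2) (Finset.mem_univ i)
  have hdiv := entropyDivergence_eq_sum_mul_log (fun i ↦ (hy₀pos i).ne') (hy.2.trans hy₀.2.symm)
  simpa only [hw.2, mul_one, hdiv] using
    l1l1_vr_estimator_local_moment_general A hy₀pos hy.1 hw.1 hmax
end

section
/- Let A ∈ ℝ^{m×n} have every row nonzero, let y, y₀ ∈ ℝᵐ, and define the oblivious distribution p_{ij} = ( ‖A_{i:}‖₁² / Σ_{k=1}^m ‖A_{k:}‖₁² ) · ( |A_{ij}| / ‖A_{i:}‖₁ ). Then Σ_{(i,j) : A_{ij} ≠ 0} A_{ij}² · ( y_i − (y₀)_i )² / p_{ij} = ( Σ_{i=1}^m ‖A_{i:}‖₁² ) · ‖y − y₀‖₂². -/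
/-!
The pair `(i, j)` is sampled in two stages. Given the row `i`, the column is drawn proportionally to
`|A i j|`, so the conditional second moment `∑ⱼ A i j ^ 2 / (|A i j| / ‖A i‖₁)` is `‖A i‖₁ ^ 2`.
Drawing the rows proportionally to these conditional moments then makes every row contribute the
same multiple `∑ₖ ‖A k‖₁ ^ 2` of `(y i - y₀ i) ^ 2`.
-/

lemma sum_abs_ne_zero {κ α : Type*} [Fintype κ] [AddCommGroup α] [LinearOrder α]
    [IsOrderedAddMonoid α] {a : κ → α} (ha : a ≠ 0) : ∑ j, |a j| ≠ 0 := by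
  contrapose! ha
  ext j
  exact abs_eq_zero.mp <|
    (Finset.sum_eq_zero_iff_of_nonneg fun _ _ => abs_nonneg _).mp ha j (Finset.mem_univ j)

section ImportanceSampling

variable {ι κ 𝕜 : Type*} [Field 𝕜]

lemma sum_mul_div_div_of_ne_zero (s : Finset ι) {w : ι → 𝕜} (hw : ∀ i ∈ s, w i ≠ 0)
    (c : ι → 𝕜) (S : 𝕜) :
    ∑ i ∈ s, w i * c i / (w i / S) = S * ∑ i ∈ s, c i := by
  rw [Finset.mul_sum]
  refine Finset.sum_congr rfl fun i hi => ?_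
  have := hw i hi
  field_simp

variable [LinearOrder 𝕜]

-- Both sides are `0` when `a = 0` or `r = 0`, because `x / 0 = 0`.
lemma sq_div_abs_div (a r : 𝕜) : a ^ 2 / (|a| / r) = |a| * r := by
  rw [← sq_abs, div_div_eq_mul_div, mul_div_right_comm, sq, mul_self_div_self]

lemma sum_sq_div_abs_div_sum_abs (s : Finset κ) (a : κ → 𝕜) :
    ∑ j ∈ s, a j ^ 2 / (|a j| / ∑ l ∈ s, |a l|) = (∑ j ∈ s, |a j|) ^ 2 := by
  simp_rw [sq_div_abs_div, ← Finset.sum_mul, ← sq]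

lemma sum_sq_mul_div_mul_abs_div_sum_abs (s : Finset κ) (a : κ → 𝕜) (c q : 𝕜) :
    ∑ j ∈ s, a j ^ 2 * c / (q * (|a j| / ∑ l ∈ s, |a l|)) = (∑ j ∈ s, |a j|) ^ 2 * c / q := by
  simp_rw [mul_comm q, mul_div_mul_comm, ← Finset.sum_mul, sum_sq_div_abs_div_sum_abs,
    mul_div_assoc]

/-- The oblivious sampling distribution `p_{ij}` of the `ℓ₂`-`ℓ₂` coordinate gradient estimator:
the row `i` has probability proportional to `‖A_{i:}‖₁²` and, given `i`, the column `j` has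
probability proportional to `|A_{ij}|`. It is encoded as a plain matrix of values in `𝕜`; a zero row
receives the value `0` through `0 / 0 = 0`. -/
def obliviousProb [Fintype ι] [Fintype κ] (A : Matrix ι κ 𝕜) (i : ι) (j : κ) : 𝕜 :=
  (∑ l, |A i l|) ^ 2 / (∑ k, (∑ l, |A k l|) ^ 2) * (|A i j| / ∑ l, |A i l|)

theorem l2l2_vr_estimator_moment_eq_general [IsStrictOrderedRing 𝕜] [Fintype ι] [Fintype κ]
    (A : Matrix ι κ 𝕜) (hrow : ∀ i, A i ≠ 0) (y y₀ : ι → 𝕜) :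
    (∑ i, ∑ j, if A i j ≠ 0 then A i j ^ 2 * (y i - y₀ i) ^ 2 / obliviousProb A i j else 0)
      = (∑ i, (∑ l, |A i l|) ^ 2) * ∑ i, (y i - y₀ i) ^ 2 := by
  have drop_support (i : ι) (j : κ) :
      (if A i j ≠ 0 then A i j ^ 2 * (y i - y₀ i) ^ 2 / obliviousProb A i j else 0)
        = A i j ^ 2 * (y i - y₀ i) ^ 2 / obliviousProb A i j :=
    ite_eq_left_iff.mpr fun h => by simp [not_not.mp h]
  simp_rw [drop_support, obliviousProb, sum_sq_mul_div_mul_abs_div_sum_abs]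
  exact sum_mul_div_div_of_ne_zero _ (fun i _ => pow_ne_zero 2 (sum_abs_ne_zero (hrow i))) _ _

end ImportanceSampling

/-- Exact second moment identity for the oblivious variance-reduced
ℓ₂-ℓ₂ coordinate estimator: with
`p_{ij} = (‖A_{i:}‖₁²/∑ₖ‖A_{k:}‖₁²)·(|A_{ij}|/‖A_{i:}‖₁)`,
`∑_{A_{ij}≠0} A_{ij}² (yᵢ − (y₀)ᵢ)²/p_{ij} = (∑ᵢ ‖A_{i:}‖₁²)·‖y − y₀‖₂²`. -/
theorem l2l2_vr_estimator_moment_eq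
    (m n : ℕ) (A : Matrix (Fin m) (Fin n) ℝ) (hrow : ∀ i, A i ≠ 0)
    (y y₀ : Fin m → ℝ)
    (p : Fin m → Fin n → ℝ)
    (hp : ∀ i j, p i j =
      (∑ l, |A i l|) ^ 2 / (∑ k, (∑ l, |A k l|) ^ 2) * (|A i j| / ∑ l, |A i l|)) :
    (∑ i, ∑ j, if A i j ≠ 0 then (A i j) ^ 2 * (y i - y₀ i) ^ 2 / p i j else 0)
      = (∑ i, (∑ l, |A i l|) ^ 2) * ∑ i, (y i - y₀ i) ^ 2 := by
  obtain rfl : p = obliviousProb A := funext₂ hp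
  exact l2l2_vr_estimator_moment_eq_general A hrow y y₀
end
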